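/- Let δ > 0, 0 < a < 1, γ > 0, assume p ≥ 2, and let Pen : 𝓜 → ℝ satisfy Pen(M) ≥ (4σ²(δ+1)/(a ν_r²)) ‖Ψ_M‖_F² ln p for every M ∈ 𝓜. Let M̂ be any minimizer over the restricted collection 𝓜_γ = {M ∈ 𝓜 : ‖Ψ_M‖_F² ≤ γ² n} of ‖z − f̂_M‖² + Pen(M). Then E‖f̂_{M̂} − f‖² ≤ ((1+a)/(1−a)) · min_{M ∈ 𝓜_γ} { ‖f_M − f‖² + (3/(2(1+a))) Pen(M) } + (4 γ² σ²/(a(1−a) ν_r²)) · n p^{−δ}. -/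

import Mathlib

open MeasureTheory ProbabilityTheory Matrix Finset

noncomputable section

/-- Squared Euclidean norm of a vector in `ℝ^k`. -/
def sqnorm {k : ℕ} (v : Fin k → ℝ) : ℝ := ∑ i, v i ^ 2

/-- Euclidean inner product on `ℝ^k`. -/
def ip {k : ℕ} (u v : Fin k → ℝ) : ℝ := ∑ i, u i * v i

/-- The `j`-th column of a matrix. -/
def colv {a b : ℕ} (B : Matrix (Fin a) (Fin b) ℝ) (j : Fin b) : Fin a → ℝ := fun i => B i j

/-- The matrix `B_M`: the columns of `B` outside `M` are replaced by zero. -/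
def restr {a b : ℕ} (B : Matrix (Fin a) (Fin b) ℝ) (M : Finset (Fin b)) :
    Matrix (Fin a) (Fin b) ℝ := fun i j => if j ∈ M then B i j else 0

/-- Squared Frobenius norm of a matrix. -/
def frob2 {a b : ℕ} (B : Matrix (Fin a) (Fin b) ℝ) : ℝ := ∑ j, sqnorm (colv B j)

/-- `x` has at most `r` nonzero coordinates. -/
def sparse {k : ℕ} (r : ℕ) (x : Fin k → ℝ) : Prop := (Function.support x).ncard ≤ r

/-- `H` is the orthogonal projection matrix of `ℝ^m` onto `span{φ_j : j ∈ M}`: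
symmetric, idempotent, with range equal to the span of the columns of `Φ` indexed by `M`. -/
def IsProjOnto {m p : ℕ} (Φ : Matrix (Fin m) (Fin p) ℝ) (M : Finset (Fin p))
    (H : Matrix (Fin m) (Fin m) ℝ) : Prop :=
  H.IsSymm ∧ H * H = H ∧
    LinearMap.range H.mulVecLin = Submodule.span ℝ (colv Φ '' (M : Set (Fin p)))

/-- `Ψ = A (AᵀA)⁻¹ Φ`. -/
def Psi {n m p : ℕ} (A : Matrix (Fin n) (Fin m) ℝ) (Φ : Matrix (Fin m) (Fin p) ℝ) :
    Matrix (Fin n) (Fin p) ℝ := A * (Aᵀ * A)⁻¹ * Φ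

/-- `z = (AᵀA)⁻¹ Aᵀ y` where `y = A f + σ e`. -/
def zv {n m : ℕ} (A : Matrix (Fin n) (Fin m) ℝ) (f : Fin m → ℝ) (σ : ℝ) (e : Fin n → ℝ) :
    Fin m → ℝ := ((Aᵀ * A)⁻¹ * Aᵀ).mulVec (A.mulVec f + σ • e)

/-- `ξ = (AᵀA)⁻¹ Aᵀ e`. -/
def xiv {n m : ℕ} (A : Matrix (Fin n) (Fin m) ℝ) (e : Fin n → ℝ) : Fin m → ℝ :=
  ((Aᵀ * A)⁻¹ * Aᵀ).mulVec e

/-- The collection `𝓜` of models of size at most `r/2`. -/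
def models (p r : ℕ) : Finset (Finset (Fin p)) := Finset.univ.filter fun M => 2 * M.card ≤ r

open scoped Classical in
/-- The restricted collection `𝓜_γ = {M ∈ 𝓜 : ‖Ψ_M‖_F² ≤ γ²n}`. -/
def modelsG {n m p : ℕ} (r : ℕ) (A : Matrix (Fin n) (Fin m) ℝ) (Φ : Matrix (Fin m) (Fin p) ℝ)
    (γ : ℝ) : Finset (Finset (Fin p)) :=
  Finset.univ.filter fun M => 2 * M.card ≤ r ∧ frob2 (restr (Psi A Φ) M) ≤ γ ^ 2 * (n : ℝ)

/-- The aggregated estimator `f̂_θ = ∑_{M ∈ C} θ_M f̂_M`, where `f̂_M = H_M z`. -/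
def aggEst {m p : ℕ} (C : Finset (Finset (Fin p)))
    (H : Finset (Fin p) → Matrix (Fin m) (Fin m) ℝ) (zvec : Fin m → ℝ)
    (θ : Finset (Fin p) → ℝ) : Fin m → ℝ :=
  ∑ M ∈ C, θ M • (H M).mulVec zvec

/-- The penalty `U_M = 4σ²(δ+1)ν_r⁻² ‖Ψ_M‖_F² ln p`. -/
def Ufun {n m p : ℕ} (A : Matrix (Fin n) (Fin m) ℝ) (Φ : Matrix (Fin m) (Fin p) ℝ)
    (σ δ ν2 : ℝ) (M : Finset (Fin p)) : ℝ :=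
  4 * σ ^ 2 * (δ + 1) / ν2 * frob2 (restr (Psi A Φ) M) * Real.log p

/-- The Q-aggregation criterion (with `α = 1/2`, multiplied by 2):
`∑_M θ_M (‖z - f̂_M‖² + 2U_M) + ‖z - f̂_θ‖²`. -/
def aggCrit {m p : ℕ} (C : Finset (Finset (Fin p)))
    (H : Finset (Fin p) → Matrix (Fin m) (Fin m) ℝ) (zvec : Fin m → ℝ)
    (U : Finset (Fin p) → ℝ) (θ : Finset (Fin p) → ℝ) : ℝ :=
  ∑ M ∈ C, θ M * (sqnorm (zvec - (H M).mulVec zvec) + 2 * U M) +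
    sqnorm (zvec - aggEst C H zvec θ)

lemma law_linear {n : ℕ} (w : Fin n → ℝ) :
    (Measure.pi fun _ : Fin n => gaussianReal 0 1).map (fun e => ∑ i, w i * e i)
      = gaussianReal 0 (∑ i, w i ^ 2).toNNReal := by
  have hwm : Measurable (fun e : Fin n → ℝ => ∑ i, w i * e i) :=
    Finset.measurable_sum _ fun i _ => by
      have h : Measurable (fun e : Fin n → ℝ => e i) := measurable_pi_apply i
      exact h.const_mul (w i)
  have : IsProbabilityMeasure ((Measure.pi fun _ : Fin n => gaussianReal 0 1).map
      (fun e => ∑ i, w i * e i)) := Measure.isProbabilityMeasure_map hwm.aemeasurable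
  apply Measure.ext_of_charFun
  ext t
  rw [charFun_apply_real, charFun_gaussianReal, integral_map hwm.aemeasurable (by fun_prop)]
  have h1 : ∀ e : Fin n → ℝ, Complex.exp (t * ((∑ i, w i * e i : ℝ) : ℂ) * Complex.I)
      = ∏ i, Complex.exp (((t * w i : ℝ) : ℂ) * (e i : ℂ) * Complex.I) := by
    intro e
    rw [← Complex.exp_sum]
    congr 1
    push_cast
    rw [Finset.mul_sum, Finset.sum_mul]
    exact Finset.sum_congr rfl fun i _ => by ring
  simp_rw [h1]
  rw [integral_fintype_prod_eq_prod (fun i (x : ℝ) => Complex.exp (((t * w i : ℝ) : ℂ) * (x : ℂ) * Complex.I))]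
  simp_rw [← charFun_apply_real, charFun_gaussianReal]
  rw [← Complex.exp_sum]
  congr 1
  have : ((∑ i, w i ^ 2).toNNReal : ℝ) = ∑ i, w i ^ 2 :=
    Real.coe_toNNReal _ (Finset.sum_nonneg fun i _ => sq_nonneg _)
  rw [show (((∑ i, w i ^ 2).toNNReal : ℝ) : ℂ) = ((∑ i, w i ^ 2 : ℝ) : ℂ) by rw [this]]
  push_cast
  simp only [mul_zero, zero_mul, zero_sub, Finset.sum_mul, Finset.sum_div, Finset.sum_neg_distrib]
  congr 1
  exact Finset.sum_congr rfl fun i _ => by ring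

lemma gauss_sq_integrable : Integrable (fun x : ℝ => x ^ 2) (gaussianReal 0 1) := by
  have := (memLp_id_gaussianReal (μ := 0) (v := 1) 2).integrable_sq
  simpa using this

lemma gauss_sq : ∫ x, x ^ 2 ∂(gaussianReal 0 1) = 1 := by
  have h := variance_id_gaussianReal (μ := 0) (v := 1)
  rw [variance_of_integral_eq_zero (by fun_prop) (by simp)] at h
  simpa using h

lemma gauss_tail {T : ℝ} (hT : 1.38 ≤ T) :
    ∫ x, max (x ^ 2 - T) 0 ∂(gaussianReal 0 1) ≤ 3 / 2 * Real.exp (-T / 2) := by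
  have hT0 : 0 ≤ T := by linarith
  set c := √T with hc
  have hcc : c ^ 2 = T := Real.sq_sqrt hT0
  have hcpos : 0 < c := Real.sqrt_pos.2 (by linarith)
  let G : ℝ → ℝ := fun x => (-2 * (x - c) - 2 / c) * Real.exp (-(1/2) * x ^ 2)
  let G' : ℝ → ℝ := fun x => (2 * x * (x - c) - 2 + 2 * x / c) * Real.exp (-(1/2) * x ^ 2)
  have hder : ∀ x ∈ Set.Ici c, HasDerivAt G (G' x) x := by
    intro x _
    have h1 : HasDerivAt (fun x : ℝ => -2 * (x - c) - 2 / c) (-2) x := by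
      simpa using (((hasDerivAt_id x).sub_const c).const_mul (-2)).sub_const (2 / c)
    have h2 : HasDerivAt (fun x : ℝ => Real.exp (-(1/2) * x ^ 2))
        (Real.exp (-(1/2) * x ^ 2) * (-(1/2) * (2 * x))) x := by
      have := ((hasDerivAt_pow 2 x).const_mul (-(1/2 : ℝ))).exp
      simpa using this
    convert! h1.mul h2 using 1
    simp only [G']
    ring
  have hpos : ∀ x ∈ Set.Ioi c, 2 * x * (x - c) ≤ 2 * x * (x - c) - 2 + 2 * x / c := by
    intro x hx
    have : 1 ≤ x / c := by rw [le_div_iff₀ hcpos]; linarith [Set.mem_Ioi.1 hx]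
    have e : 2 * x / c = 2 * (x / c) := by ring
    linarith
  have hG'nn : ∀ x ∈ Set.Ioi c, 0 ≤ G' x := by
    intro x hx
    have := hpos x hx
    have hx' := Set.mem_Ioi.1 hx
    apply mul_nonneg _ (Real.exp_pos _).le
    nlinarith [mul_nonneg (hcpos.trans hx').le (sub_nonneg.2 hx'.le)]
  have hlim : Filter.Tendsto G Filter.atTop (nhds 0) := by
    have h1 : Filter.Tendsto (fun x : ℝ => x * Real.exp (-(1/2) * x ^ 2)) Filter.atTop (nhds 0) := by
      have := tendsto_rpow_abs_mul_exp_neg_mul_sq_cocompact (a := 1/2) (by norm_num) 1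
      have := this.mono_left _root_.atTop_le_cocompact
      refine this.congr' ?_
      filter_upwards [Filter.eventually_ge_atTop 0] with x hx
      simp [abs_of_nonneg hx]
    have h2 : Filter.Tendsto (fun x : ℝ => Real.exp (-(1/2) * x ^ 2)) Filter.atTop (nhds 0) := by
      have := tendsto_rpow_abs_mul_exp_neg_mul_sq_cocompact (a := 1/2) (by norm_num) 0
      have := this.mono_left _root_.atTop_le_cocompact
      simpa using this
    have := (h1.const_mul (-2)).add (h2.const_mul (2 * c - 2 / c))
    simp only [mul_zero, add_zero] at this
    refine this.congr fun x => ?_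
    simp only [G]; ring
  have hint : IntegrableOn G' (Set.Ioi c) := integrableOn_Ioi_deriv_of_nonneg' hder hG'nn hlim
  have hval : ∫ x in Set.Ioi c, G' x = 2 / c * Real.exp (-T / 2) := by
    rw [integral_Ioi_of_hasDerivAt_of_nonneg' hder hG'nn hlim]
    simp only [G, hcc]
    ring_nf
  rw [integral_gaussianReal_eq_integral_smul one_ne_zero]
  have e1 : ∀ x : ℝ, gaussianPDFReal 0 1 x • max (x ^ 2 - T) 0
      = (√(2 * Real.pi))⁻¹ * (fun y : ℝ => max (y ^ 2 - T) 0 * Real.exp (-(1/2) * y ^ 2)) |x| := by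
    intro x
    simp [gaussianPDFReal]
    ring_nf
  simp_rw [e1]
  rw [integral_const_mul, integral_comp_abs (f := fun y : ℝ => max (y ^ 2 - T) 0 * Real.exp (-(1/2) * y ^ 2))]
  have e2 : ∫ x in Set.Ioi (0:ℝ), max (x ^ 2 - T) 0 * Real.exp (-(1/2) * x ^ 2)
      ≤ 2 / c * Real.exp (-T / 2) := by
    rw [← hval, ← integral_indicator measurableSet_Ioi, ← integral_indicator measurableSet_Ioi]
    apply integral_mono_of_nonneg
    · refine Filter.Eventually.of_forall fun x => Set.indicator_nonneg (fun x _ => ?_) x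
      positivity
    · exact hint.integrable_indicator measurableSet_Ioi
    · refine Filter.Eventually.of_forall fun x => ?_
      by_cases hx : x ∈ Set.Ioi c
      · have hx' := Set.mem_Ioi.1 hx
        rw [Set.indicator_of_mem hx, Set.indicator_of_mem (Set.mem_Ioi.2 (hcpos.trans hx'))]
        apply mul_le_mul_of_nonneg_right _ (Real.exp_pos _).le
        refine le_trans ?_ (hpos x hx)
        apply max_le
        · nlinarith [sq_nonneg (x - c)]
        · exact mul_nonneg (by linarith) (by linarith)
      · rw [Set.indicator_of_notMem hx]
        by_cases hx0 : x ∈ Set.Ioi 0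
        · rw [Set.indicator_of_mem hx0]
          have : x ^ 2 ≤ T := by
            rw [← hcc]; exact pow_le_pow_left₀ (Set.mem_Ioi.1 hx0).le (not_lt.1 hx) 2
          rw [max_eq_right (by linarith)]; simp
        · rw [Set.indicator_of_notMem hx0]
  have hs : 0 < √(2 * Real.pi) := Real.sqrt_pos.2 (by positivity)
  have key : 4 ≤ 3 / 2 * (√(2 * Real.pi) * c) := by
    rw [hc, ← Real.sqrt_mul (by positivity)]
    have : (8:ℝ) / 3 ≤ √(2 * Real.pi * T) := by
      apply Real.le_sqrt_of_sq_le
      nlinarith [Real.pi_gt_d2]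
    linarith
  calc _ ≤ (√(2 * Real.pi))⁻¹ * (2 * (2 / c * Real.exp (-T / 2))) := by gcongr
    _ = 4 / (√(2 * Real.pi) * c) * Real.exp (-T / 2) := by field_simp; norm_num
    _ ≤ _ := by
      refine mul_le_mul_of_nonneg_right ?_ (Real.exp_pos _).le
      rw [div_le_iff₀ (by positivity)]
      exact key

section
variable {Ω : Type*} [MeasurableSpace Ω] {μ : Measure Ω} {X : Ω → ℝ} {v : ℝ}

lemma gauss_scale (hv : 0 ≤ v) : gaussianReal 0 v.toNNReal = (gaussianReal 0 1).map (fun x => √v * x) := by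
  rw [gaussianReal_map_const_mul]
  congr 1
  · simp
  · ext; simp [Real.sq_sqrt hv, hv]

lemma X_sq (hX : AEMeasurable X μ) (hv : 0 ≤ v) (h : μ.map X = gaussianReal 0 v.toNNReal) :
    Integrable (fun ω => X ω ^ 2) μ ∧ ∫ ω, X ω ^ 2 ∂μ = v := by
  have e : ∀ x : ℝ, (√v * x) ^ 2 = v * x ^ 2 := fun x => by rw [mul_pow, Real.sq_sqrt hv]
  have hi : Integrable (fun x : ℝ => x ^ 2) (gaussianReal 0 v.toNNReal) := by
    rw [gauss_scale hv]
    rw [integrable_map_measure (by fun_prop) (by fun_prop)]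
    simpa [Function.comp_def, e] using gauss_sq_integrable.const_mul v
  constructor
  · rw [← h] at hi
    exact (integrable_map_measure (by fun_prop) hX).1 hi
  · rw [← integral_map (f := fun x : ℝ => x ^ 2) hX (by fun_prop), h, gauss_scale hv,
      integral_map (by fun_prop) (by fun_prop)]
    simp_rw [e]
    rw [integral_const_mul, gauss_sq, mul_one]

lemma X_tail (hX : AEMeasurable X μ) (hv : 0 ≤ v) (h : μ.map X = gaussianReal 0 v.toNNReal)
    {T : ℝ} (hT : 1.38 ≤ T) :
    ∫ ω, max (X ω ^ 2 - v * T) 0 ∂μ ≤ v * (3 / 2 * Real.exp (-T / 2)) := by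
  rw [← integral_map (f := fun x : ℝ => max (x ^ 2 - v * T) 0) hX
    (by fun_prop), h, gauss_scale hv, integral_map (by fun_prop) (by fun_prop)]
  have e : ∀ x : ℝ, max ((√v * x) ^ 2 - v * T) 0 = v * max (x ^ 2 - T) 0 := fun x => by
    rw [mul_pow, Real.sq_sqrt hv, mul_max_of_nonneg _ _ hv, mul_sub, mul_zero]
  simp_rw [e]
  rw [integral_const_mul]
  exact mul_le_mul_of_nonneg_left (gauss_tail hT) hv
end

lemma sqnorm_eq_dot {k : ℕ} (v : Fin k → ℝ) : sqnorm v = v ⬝ᵥ v := by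
  simp [sqnorm, dotProduct, sq]

lemma sqnorm_nonneg' {k : ℕ} (v : Fin k → ℝ) : 0 ≤ sqnorm v :=
  Finset.sum_nonneg fun _ _ => sq_nonneg _

lemma sqnorm_add' {k : ℕ} (u v : Fin k → ℝ) :
    sqnorm (u + v) = sqnorm u + 2 * (u ⬝ᵥ v) + sqnorm v := by
  simp only [sqnorm_eq_dot, add_dotProduct, dotProduct_add, dotProduct_comm v u]; ring

lemma proj_le {m p : ℕ} {Φ : Matrix (Fin m) (Fin p) ℝ} {M : Finset (Fin p)}
    {H : Matrix (Fin m) (Fin m) ℝ} (hH : IsProjOnto Φ M H) (z g : Fin m → ℝ) :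
    sqnorm (z - H.mulVec z) ≤ sqnorm (z - H.mulVec g) := by
  have e : z - H.mulVec g = (z - H.mulVec z) + H.mulVec (z - g) := by
    rw [mulVec_sub]; abel
  have o : ∀ u, (z - H.mulVec z) ⬝ᵥ H.mulVec u = 0 := by
    intro u
    have hz : H.mulVec z = vecMul z H := by
      conv_lhs => rw [← hH.1.eq]
      rw [mulVec_transpose]
    rw [sub_dotProduct, hz, ← dotProduct_mulVec, mulVec_mulVec, hH.2.1, sub_self]
  rw [e, sqnorm_add', o]
  linarith [sqnorm_nonneg' (H.mulVec (z - g))]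

lemma proj_mem {m p : ℕ} {Φ : Matrix (Fin m) (Fin p) ℝ} {M : Finset (Fin p)}
    {H : Matrix (Fin m) (Fin m) ℝ} (hH : IsProjOnto Φ M H) (z : Fin m → ℝ) :
    ∃ x : Fin p → ℝ, (∀ j ∉ M, x j = 0) ∧ H.mulVec z = Φ.mulVec x := by
  have h : H.mulVec z ∈ Submodule.span ℝ (colv Φ '' (M : Set (Fin p))) := by
    rw [← hH.2.2]; exact ⟨z, rfl⟩
  generalize H.mulVec z = w at h
  induction h using Submodule.span_induction with
  | mem w hw =>
    obtain ⟨j, hj, rfl⟩ := hw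
    refine ⟨Pi.single j 1, fun k hk => ?_, ?_⟩
    · rw [Pi.single_eq_of_ne]; rintro rfl; exact hk hj
    · ext i; simp [colv]
  | zero => exact ⟨0, by simp, by simp⟩
  | add u v _ _ hu hv =>
    obtain ⟨x, hx, rfl⟩ := hu
    obtain ⟨y, hy, rfl⟩ := hv
    exact ⟨x + y, fun j hj => by simp [hx j hj, hy j hj], by rw [mulVec_add]⟩
  | smul c u _ hu =>
    obtain ⟨x, hx, rfl⟩ := hu
    exact ⟨c • x, fun j hj => by simp [hx j hj], by rw [mulVec_smul]⟩

lemma det_ineq {m p r : ℕ} (Φ : Matrix (Fin m) (Fin p) ℝ)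
    (σ : ℝ) (a : ℝ) (ha0 : 0 < a)
    (ν2 : ℝ) (hν2 : 0 < ν2)
    (hν2min : ∀ x : Fin p → ℝ, x ≠ 0 → sparse r x → ν2 * sqnorm x ≤ sqnorm (Φ.mulVec x))
    (M₁ M₂ : Finset (Fin p)) (hM₁ : 2 * M₁.card ≤ r) (hM₂ : 2 * M₂.card ≤ r)
    (H₁ H₂ : Matrix (Fin m) (Fin m) ℝ) (hH₁ : IsProjOnto Φ M₁ H₁) (hH₂ : IsProjOnto Φ M₂ H₂)
    (z f ξ : Fin m → ℝ) (hz : z = f + σ • ξ) (P₁ P₂ : ℝ)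
    (hmin : sqnorm (z - H₁.mulVec z) + P₁ ≤ sqnorm (z - H₂.mulVec z) + P₂) :
    (1 - a) * sqnorm (H₁.mulVec z - f) ≤ (1 + a) * sqnorm (H₂.mulVec f - f) + P₂ - P₁ +
      2 * σ ^ 2 / (a * ν2) * (∑ j ∈ M₁, (ξ ⬝ᵥ colv Φ j) ^ 2 + ∑ j ∈ M₂, (ξ ⬝ᵥ colv Φ j) ^ 2) := by
  obtain ⟨x₁, hx₁, e₁⟩ := proj_mem hH₁ z
  obtain ⟨x₂, hx₂, e₂⟩ := proj_mem hH₂ f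
  have hp := proj_le hH₂ z f
  set x := x₁ - x₂ with hx
  set S := ∑ j ∈ M₁, (ξ ⬝ᵥ colv Φ j) ^ 2 + ∑ j ∈ M₂, (ξ ⬝ᵥ colv Φ j) ^ 2 with hS
  have hx0 : ∀ j ∉ M₁ ∪ M₂, x j = 0 := by
    intro j hj
    rw [Finset.mem_union, not_or] at hj
    simp [hx, hx₁ j hj.1, hx₂ j hj.2]
  have hΦx : Φ.mulVec x = H₁.mulVec z - H₂.mulVec f := by rw [hx, mulVec_sub, e₁, e₂]
  have hν : ν2 * sqnorm x ≤ sqnorm (Φ.mulVec x) := by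
    by_cases h0 : x = 0
    · simp [h0, sqnorm]
    · apply hν2min x h0
      have hsub : Function.support x ⊆ ((M₁ ∪ M₂ : Finset (Fin p)) : Set (Fin p)) := by
        intro j hj
        by_contra h
        exact hj (hx0 j (by simpa using h))
      have := Set.ncard_le_ncard hsub (Finset.finite_toSet _)
      rw [Set.ncard_coe_finset] at this
      have := Finset.card_union_le M₁ M₂
      unfold sparse
      omega
  -- scalar product
  have hip : ξ ⬝ᵥ Φ.mulVec x = ∑ j ∈ M₁ ∪ M₂, x j * (ξ ⬝ᵥ colv Φ j) := by
    have h1 : ξ ⬝ᵥ Φ.mulVec x = ∑ j, x j * (ξ ⬝ᵥ colv Φ j) := by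
      simp only [dotProduct, mulVec, colv, Finset.mul_sum]
      rw [Finset.sum_comm]
      exact Finset.sum_congr rfl fun j _ => Finset.sum_congr rfl fun i _ => by ring
    rw [h1]
    symm
    apply Finset.sum_subset (Finset.subset_univ _)
    intro j _ hj
    rw [hx0 j hj, zero_mul]
  have hSu : ∑ j ∈ M₁ ∪ M₂, (ξ ⬝ᵥ colv Φ j) ^ 2 ≤ S := by
    rw [hS, ← Finset.sum_union_inter]
    have : 0 ≤ ∑ j ∈ M₁ ∩ M₂, (ξ ⬝ᵥ colv Φ j) ^ 2 := Finset.sum_nonneg fun _ _ => sq_nonneg _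
    linarith
  have hxs : ∑ j ∈ M₁ ∪ M₂, x j ^ 2 ≤ sqnorm x :=
    Finset.sum_le_univ_sum_of_nonneg fun _ => sq_nonneg _
  have hbd : 2 * σ * (ξ ⬝ᵥ Φ.mulVec x) ≤ a * ν2 / 2 * sqnorm x + 2 * σ ^ 2 / (a * ν2) * S := by
    calc 2 * σ * (ξ ⬝ᵥ Φ.mulVec x)
        = ∑ j ∈ M₁ ∪ M₂, 2 * σ * (x j * (ξ ⬝ᵥ colv Φ j)) := by rw [hip, Finset.mul_sum]
      _ ≤ ∑ j ∈ M₁ ∪ M₂, (a * ν2 / 2 * x j ^ 2 + 2 * σ ^ 2 / (a * ν2) * (ξ ⬝ᵥ colv Φ j) ^ 2) := by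
          refine Finset.sum_le_sum fun j _ => ?_
          set y := ξ ⬝ᵥ colv Φ j
          have hpos : 0 < a * ν2 := by positivity
          have : a * ν2 / 2 * x j ^ 2 + 2 * σ ^ 2 / (a * ν2) * y ^ 2 - 2 * σ * (x j * y)
              = (a * ν2 * x j - 2 * σ * y) ^ 2 / (2 * (a * ν2)) := by
            field_simp; ring
          have h2 : 0 ≤ (a * ν2 * x j - 2 * σ * y) ^ 2 / (2 * (a * ν2)) := by positivity
          linarith
      _ = a * ν2 / 2 * ∑ j ∈ M₁ ∪ M₂, x j ^ 2 +
            2 * σ ^ 2 / (a * ν2) * ∑ j ∈ M₁ ∪ M₂, (ξ ⬝ᵥ colv Φ j) ^ 2 := by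
          rw [Finset.sum_add_distrib, Finset.mul_sum, Finset.mul_sum]
      _ ≤ _ := by gcongr
  have htri : sqnorm (Φ.mulVec x) ≤ 2 * sqnorm (H₁.mulVec z - f) + 2 * sqnorm (H₂.mulVec f - f) := by
    rw [hΦx]
    simp only [sqnorm, Finset.mul_sum, ← Finset.sum_add_distrib, Pi.sub_apply]
    refine Finset.sum_le_sum fun i _ => ?_
    nlinarith [sq_nonneg (H₁.mulVec z i - f i + (H₂.mulVec f i - f i))]
  have hexp : sqnorm (z - H₁.mulVec z) - sqnorm (z - H₂.mulVec f) =
      sqnorm (H₁.mulVec z - f) - sqnorm (H₂.mulVec f - f) - 2 * σ * (ξ ⬝ᵥ Φ.mulVec x) := by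
    rw [hΦx]
    generalize H₁.mulVec z = u
    generalize H₂.mulVec f = v
    subst hz
    simp only [sqnorm, dotProduct, Finset.mul_sum, ← Finset.sum_sub_distrib, Pi.sub_apply,
      Pi.add_apply, Pi.smul_apply, smul_eq_mul]
    exact Finset.sum_congr rfl fun i _ => by ring
  have : a / 2 * (ν2 * sqnorm x) ≤ a / 2 * (2 * sqnorm (H₁.mulVec z - f) + 2 * sqnorm (H₂.mulVec f - f)) := by
    gcongr; exact hν.trans htri
  nlinarith

lemma zv_eq {n m : ℕ} (A : Matrix (Fin n) (Fin m) ℝ) (hrank : A.rank = m) (f : Fin m → ℝ)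
    (σ : ℝ) (e : Fin n → ℝ) : zv A f σ e = f + σ • xiv A e := by
  have hu : IsUnit (Aᵀ * A) := by
    rw [← Matrix.mulVec_surjective_iff_isUnit]
    have h : (Aᵀ * A).rank = m := by rw [rank_transpose_mul_self, hrank]
    have : LinearMap.range (Aᵀ * A).mulVecLin = ⊤ := by
      apply Submodule.eq_top_of_finrank_eq
      rw [← Matrix.rank, h]; simp
    exact LinearMap.range_eq_top.1 this
  have hd := (Matrix.isUnit_iff_isUnit_det _).1 hu
  unfold zv xiv
  rw [mulVec_add, mulVec_mulVec, mulVec_smul, Matrix.mul_assoc, Matrix.nonsing_inv_mul _ hd, one_mulVec]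

lemma xiv_dot {n m p : ℕ} (A : Matrix (Fin n) (Fin m) ℝ) (Φ : Matrix (Fin m) (Fin p) ℝ)
    (e : Fin n → ℝ) (j : Fin p) : xiv A e ⬝ᵥ colv Φ j = ∑ i, colv (Psi A Φ) j i * e i := by
  have h1 : colv (Psi A Φ) j = (A * (Aᵀ * A)⁻¹).mulVec (colv Φ j) := by
    ext i; simp [colv, Psi, Matrix.mul_apply, mulVec, dotProduct]
  have h2 : (Aᵀ * A)⁻¹ * Aᵀ = (A * (Aᵀ * A)⁻¹)ᵀ := by
    rw [transpose_mul, transpose_nonsing_inv, transpose_mul, transpose_transpose]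
  change _ = colv (Psi A Φ) j ⬝ᵥ e
  rw [h1, xiv, h2, dotProduct_comm, mulVec_transpose, dotProduct_comm, ← dotProduct_mulVec, dotProduct_comm]

lemma frob2_restr {n p : ℕ} (B : Matrix (Fin n) (Fin p) ℝ) (M : Finset (Fin p)) :
    frob2 (restr B M) = ∑ j ∈ M, sqnorm (colv B j) := by
  unfold frob2
  rw [← Finset.sum_subset (Finset.subset_univ M) (f := fun j => sqnorm (colv (restr B M) j))]
  · refine Finset.sum_congr rfl fun j hj => ?_
    simp [sqnorm, colv, restr, hj]
  · intro j _ hj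
    simp [sqnorm, colv, restr, hj]

/-- Theorem 1, part 2 (oracle inequality in expectation for the penalized empirical
risk model-selection estimator over the restricted collection `𝓜_γ`). -/
theorem oracle_model_selection_expectation
    {n m p r : ℕ} (hp : 2 ≤ p) (hmn : m ≤ n)
    (A : Matrix (Fin n) (Fin m) ℝ) (hrank : A.rank = m)
    (Φ : Matrix (Fin m) (Fin p) ℝ) (hΦnorm : ∀ j, sqnorm (colv Φ j) = 1)
    (σ : ℝ) (hσ : 0 < σ) (δ : ℝ) (hδ : 0 < δ) (a : ℝ) (ha0 : 0 < a) (ha1 : a < 1)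
    (γ : ℝ) (hγ : 0 < γ)
    (ν2 : ℝ) (hν2 : 0 < ν2)
    (hν2min : ∀ x : Fin p → ℝ, x ≠ 0 → sparse r x → ν2 * sqnorm x ≤ sqnorm (Φ.mulVec x))
    (H : Finset (Fin p) → Matrix (Fin m) (Fin m) ℝ)
    (hH : ∀ M : Finset (Fin p), IsProjOnto Φ M (H M))
    {Ω : Type*} [MeasurableSpace Ω] (μ : Measure Ω) [IsProbabilityMeasure μ]
    (ε : Ω → Fin n → ℝ) (hεmeas : Measurable ε)
    (hεdist : Measure.map ε μ = Measure.pi fun _ : Fin n => gaussianReal 0 1)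
    (f : Fin m → ℝ)
    (Pen : Finset (Fin p) → ℝ)
    (hPen : ∀ M ∈ models p r,
      4 * σ ^ 2 * (δ + 1) / (a * ν2) * frob2 (restr (Psi A Φ) M) * Real.log p ≤ Pen M)
    (Mhat : Ω → Finset (Fin p))
    (hMhatMem : ∀ ω, Mhat ω ∈ modelsG r A Φ γ)
    (hMhatMin : ∀ ω, ∀ M ∈ modelsG r A Φ γ,
      sqnorm (zv A f σ (ε ω) - (H (Mhat ω)).mulVec (zv A f σ (ε ω))) + Pen (Mhat ω) ≤
        sqnorm (zv A f σ (ε ω) - (H M).mulVec (zv A f σ (ε ω))) + Pen M)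
    (hmeas : Measurable fun ω => sqnorm ((H (Mhat ω)).mulVec (zv A f σ (ε ω)) - f)) :
    ∀ M ∈ modelsG r A Φ γ,
      ∫ ω, sqnorm ((H (Mhat ω)).mulVec (zv A f σ (ε ω)) - f) ∂μ ≤
        (1 + a) / (1 - a) *
          (sqnorm ((H M).mulVec f - f) + 3 / (2 * (1 + a)) * Pen M) +
        4 * γ ^ 2 * σ ^ 2 / (a * (1 - a) * ν2) * (n : ℝ) * (p : ℝ) ^ (-δ) := by
  intro M hM
  classical
  have hmem : ∀ N, N ∈ modelsG r A Φ γ →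
      2 * N.card ≤ r ∧ frob2 (restr (Psi A Φ) N) ≤ γ ^ 2 * (n : ℝ) := by
    intro N hN
    simpa [modelsG] using hN
  have hmod : ∀ N, N ∈ modelsG r A Φ γ → N ∈ models p r := by
    intro N hN
    simpa [models] using (hmem N hN).1
  set v : Fin p → ℝ := fun j => sqnorm (colv (Psi A Φ) j) with hv
  have hv0 : ∀ j, 0 ≤ v j := fun j => sqnorm_nonneg' _
  let X : Fin p → Ω → ℝ := fun j ω => ∑ i, colv (Psi A Φ) j i * ε ω i
  have hfrob : ∀ N, frob2 (restr (Psi A Φ) N) = ∑ j ∈ N, v j := fun N => frob2_restr _ N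
  have hlin : ∀ j, Measurable (fun e : Fin n → ℝ => ∑ i, colv (Psi A Φ) j i * e i) := fun j =>
    Finset.measurable_sum _ fun i _ => by
      have h : Measurable (fun e : Fin n → ℝ => e i) := measurable_pi_apply i
      exact h.const_mul (colv (Psi A Φ) j i)
  have hXm : ∀ j, Measurable (X j) := fun j => (hlin j).comp hεmeas
  have hXlaw : ∀ j, μ.map (X j) = gaussianReal 0 (v j).toNNReal := by
    intro j
    have h := law_linear (colv (Psi A Φ) j)
    rw [← hεdist, Measure.map_map (hlin j) hεmeas] at h
    exact h
  set T : ℝ := 2 * (δ + 1) * Real.log p with hT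
  have hp' : (2 : ℝ) ≤ p := by exact_mod_cast hp
  have hlog : Real.log 2 ≤ Real.log p := Real.log_le_log (by norm_num) hp'
  have hlog2 : 0.69 ≤ Real.log p := by linarith [Real.log_two_gt_d9]
  have hT1 : 1.38 ≤ T := by
    rw [hT]; nlinarith [mul_pos hδ (by linarith : (0:ℝ) < Real.log p)]
  set κ : ℝ := 2 * σ ^ 2 / (a * ν2) with hκ
  have hκ0 : 0 < κ := by positivity
  have hPen' : ∀ N, N ∈ modelsG r A Φ γ → κ * T * ∑ j ∈ N, v j ≤ Pen N := by
    intro N hN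
    refine le_trans (le_of_eq ?_) (hPen N (hmod N hN))
    rw [hfrob, hκ, hT]; ring
  set J : Finset (Fin p) := Finset.univ.filter fun j => v j ≤ γ ^ 2 * (n : ℝ) with hJ
  let g : Ω → ℝ := fun ω => (1 - a)⁻¹ * ((1 + a) * sqnorm ((H M).mulVec f - f) + Pen M +
    κ * (∑ j ∈ J, max (X j ω ^ 2 - v j * T) 0 + ∑ j ∈ M, X j ω ^ 2))
  have h1a : 0 < 1 - a := by linarith
  have hpt : ∀ ω, sqnorm ((H (Mhat ω)).mulVec (zv A f σ (ε ω)) - f) ≤ g ω := by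
    intro ω
    have hN := hMhatMem ω
    have hd := det_ineq Φ σ a ha0 ν2 hν2 hν2min (Mhat ω) M (hmem _ hN).1 (hmem _ hM).1
      (H (Mhat ω)) (H M) (hH _) (hH _) (zv A f σ (ε ω)) f (xiv A (ε ω)) (zv_eq A hrank f σ _)
      _ _ (hMhatMin ω M hM)
    simp_rw [xiv_dot] at hd
    change _ ≤ _ + κ * (∑ j ∈ Mhat ω, X j ω ^ 2 + ∑ j ∈ M, X j ω ^ 2) at hd
    have hPN := hPen' _ hN
    have hsub : Mhat ω ⊆ J := by
      intro j hj
      rw [hJ, Finset.mem_filter]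
      refine ⟨Finset.mem_univ _, ?_⟩
      have h2 := (hmem _ hN).2
      rw [hfrob] at h2
      exact (Finset.single_le_sum (fun k _ => hv0 k) hj).trans h2
    have hsum : ∑ j ∈ Mhat ω, X j ω ^ 2 - T * ∑ j ∈ Mhat ω, v j
        ≤ ∑ j ∈ J, max (X j ω ^ 2 - v j * T) 0 := by
      rw [Finset.mul_sum, ← Finset.sum_sub_distrib]
      calc _ ≤ ∑ j ∈ Mhat ω, max (X j ω ^ 2 - v j * T) 0 :=
            Finset.sum_le_sum fun j _ => by rw [mul_comm T]; exact le_max_left _ _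
        _ ≤ _ := Finset.sum_le_sum_of_subset_of_nonneg hsub fun j _ _ => le_max_right _ _
    have hsum' := mul_le_mul_of_nonneg_left hsum hκ0.le
    change _ ≤ (1 - a)⁻¹ * _
    rw [inv_mul_eq_div, le_div_iff₀ h1a]
    nlinarith
  have hsq := fun j => X_sq (hXm j).aemeasurable (hv0 j) (hXlaw j)
  have hmaxint : ∀ j, Integrable (fun ω => max (X j ω ^ 2 - v j * T) 0) μ := fun j =>
    ((hsq j).1.sub (integrable_const _)).pos_part
  have hI1 : Integrable (fun ω => ∑ j ∈ J, max (X j ω ^ 2 - v j * T) 0) μ :=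
    integrable_finsetSum _ fun j _ => hmaxint j
  have hI2 : Integrable (fun ω => ∑ j ∈ M, X j ω ^ 2) μ :=
    integrable_finsetSum _ fun j _ => (hsq j).1
  have hI3 := (hI1.add hI2).const_mul κ
  have hgint : Integrable g μ := ((integrable_const _).add hI3).const_mul _
  set E : ℝ := Real.exp (-T / 2) with hE
  set V : ℝ := γ ^ 2 * (n : ℝ) with hV
  have hV0 : 0 ≤ V := by positivity
  have hE0 : 0 < E := Real.exp_pos _
  have hb1 : ∫ ω, ∑ j ∈ J, max (X j ω ^ 2 - v j * T) 0 ∂μ ≤ p * (V * (3 / 2 * E)) := by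
    rw [integral_finsetSum _ fun j _ => hmaxint j]
    calc _ ≤ ∑ j ∈ J, V * (3 / 2 * E) := by
          refine Finset.sum_le_sum fun j hj => ?_
          refine (X_tail (hXm j).aemeasurable (hv0 j) (hXlaw j) hT1).trans ?_
          exact mul_le_mul_of_nonneg_right (Finset.mem_filter.1 hj).2 (by positivity)
      _ = (J.card : ℝ) * (V * (3 / 2 * E)) := by rw [Finset.sum_const, nsmul_eq_mul]
      _ ≤ _ := by
          apply mul_le_mul_of_nonneg_right _ (by positivity)
          have := Finset.card_le_univ J
          rw [Fintype.card_fin] at this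
          exact_mod_cast this
  have hb2 : ∫ ω, ∑ j ∈ M, X j ω ^ 2 ∂μ = ∑ j ∈ M, v j := by
    rw [integral_finsetSum _ fun j _ => (hsq j).1]
    exact Finset.sum_congr rfl fun j _ => (hsq j).2
  have hgval : ∫ ω, g ω ∂μ = (1 - a)⁻¹ * ((1 + a) * sqnorm ((H M).mulVec f - f) + Pen M +
      κ * (∫ ω, ∑ j ∈ J, max (X j ω ^ 2 - v j * T) 0 ∂μ + ∑ j ∈ M, v j)) := by
    rw [← hb2, ← integral_add hI1 hI2, integral_const_mul]
    congr 1
    have := integral_add (μ := μ)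
      (integrable_const ((1 + a) * sqnorm ((H M).mulVec f - f) + Pen M)) hI3
    rw [integral_const_mul] at this
    simpa using this
  have hpE : (p : ℝ) ^ (-δ) = p * E := by
    have hp0 : (0 : ℝ) < p := by linarith
    rw [Real.rpow_def_of_pos hp0, hE, hT]
    nth_rewrite 2 [← Real.exp_log hp0]
    rw [← Real.exp_add]
    congr 1; ring
  have hW : ∑ j ∈ M, v j ≤ V := by rw [← hfrob]; exact (hmem M hM).2
  have hW0 : 0 ≤ ∑ j ∈ M, v j := Finset.sum_nonneg fun j _ => hv0 j
  -- the slack: W (1 - T/2) ≤ V E ≤ p V E / 2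
  have hslack : (∑ j ∈ M, v j) * (1 - T / 2) ≤ p * (V * (1 / 2 * E)) := by
    have h1 : 1 - T / 2 ≤ E := by
      have := Real.add_one_le_exp (-T / 2)
      rw [hE]; linarith
    calc _ ≤ (∑ j ∈ M, v j) * E := mul_le_mul_of_nonneg_left h1 hW0
      _ ≤ V * E := mul_le_mul_of_nonneg_right hW hE0.le
      _ ≤ _ := by nlinarith [mul_nonneg hV0 hE0.le]
  have hfin : κ * (∫ ω, ∑ j ∈ J, max (X j ω ^ 2 - v j * T) 0 ∂μ + ∑ j ∈ M, v j)
      ≤ 1 / 2 * Pen M + κ * (2 * (p * (V * E))) := by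
    have hPM := hPen' M hM
    have : κ * (∫ ω, ∑ j ∈ J, max (X j ω ^ 2 - v j * T) 0 ∂μ + ∑ j ∈ M, v j)
        ≤ κ * (T / 2 * ∑ j ∈ M, v j + 2 * (p * (V * E))) :=
      mul_le_mul_of_nonneg_left (by linarith) hκ0.le
    linarith
  calc ∫ ω, sqnorm ((H (Mhat ω)).mulVec (zv A f σ (ε ω)) - f) ∂μ ≤ ∫ ω, g ω ∂μ :=
        integral_mono_of_nonneg (Filter.Eventually.of_forall fun ω => sqnorm_nonneg' _) hgint
          (Filter.Eventually.of_forall hpt)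
    _ ≤ (1 - a)⁻¹ * ((1 + a) * sqnorm ((H M).mulVec f - f) + Pen M +
          (1 / 2 * Pen M + κ * (2 * (p * (V * E))))) := by
        rw [hgval]
        exact mul_le_mul_of_nonneg_left (by linarith) (inv_nonneg.2 h1a.le)
    _ = _ := by
        rw [hpE, hκ, hV]
        field_simp
        ring
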